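/- arXiv:1209.4274 — 3 statements merged into one kernel-verified Lean document; each statement's English description precedes it below -/
import Mathlib

section
/- There exists a smooth function φ : ℝ → ℝ with the following properties: (i) 0 ≤ φ(r) ≤ 1 for all r; (ii) φ(r) = 1 for all r ≤ 1 and φ(r) = 0 for all r ≥ 2; (iii) φ is non-increasing, i.e. φ'(r) ≤ 0 for all r; (iv) φ''(r) ≥ −200·φ(r) for all r; (v) (φ'(r))² ≤ 200·(φ(r))^{3/2} for all r. -/
/-!
The cut-off is `φ r = S (2 - r) ^ 4`, where `S` is Mathlib's `Real.smoothTransition`.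

Outside the open interval `(1, 2)` the function `φ` takes its extreme values `0` and `1`, so `φ' = 0`
there; as `φ' ≤ 0` everywhere, such points are maxima of `φ'`, so `φ'' = 0` there as well.

Inside `(1, 2)`, put `x = 2 - r`, `y = r - 1`, `w = exp (1/x - 1/y)` and `q = 1/x² + 1/y²`. Then
`φ = (1 + w)⁻⁴` and `w' = q w`. The fourth power makes (v) equivalent to `w q ≤ √(25/2) (1 + w)²`, and
(iv) equivalent to a polynomial inequality in `w`, `q` and `q'`. The blow-up of `q` at the endpoints
is absorbed by the exponential through two bounds of `q` by `w⁻¹` for `y ≤ x`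
(`inv_sq_add_inv_sq_le`). For `x ≤ y`, (v) follows by exchanging `x` and `y`, and in (iv) the term
`4 w² q²`, which comes from the fourth power, dominates the negative ones.
-/

/-- With `v = 1/y - 2`, one has `1/x ≤ 2`, so `1/x² + 1/y² ≤ (v + 2)² + 4`, while
`exp (1/y - 1/x) ≥ exp v` dominates the Taylor polynomial of degree four. -/
lemma inv_sq_add_inv_sq_le {x y : ℝ} (hy : 0 < y) (hyx : y ≤ x) (hxy : x + y = 1) :
    2 * (1 / x ^ 2 + 1 / y ^ 2) ≤ 7 * (Real.exp (1 / y - 1 / x) + 2) ∧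
      (1 / x ^ 2 + 1 / y ^ 2) ^ 2 ≤ 50 * (Real.exp (1 / y - 1 / x) + 6) := by
  have hx : 0 < x := by linarith
  have hx2 : 1 / x ≤ 2 := by rw [div_le_iff₀ hx]; linarith
  have hx0 : 0 < 1 / x := by positivity
  have hy2 : 2 ≤ 1 / y := by rw [le_div_iff₀ hy]; linarith
  obtain ⟨v, hv⟩ : ∃ v, v = 1 / y - 2 := ⟨_, rfl⟩
  have hv0 : 0 ≤ v := by linarith
  have hE : 1 + v + v ^ 2 / 2 + v ^ 3 / 6 + v ^ 4 / 24 ≤ Real.exp (1 / y - 1 / x) := by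
    have h1 := Real.sum_le_exp_of_nonneg hv0 5
    norm_num [Finset.sum_range_succ, Nat.factorial] at h1
    exact h1.trans (Real.exp_le_exp.2 (by linarith))
  have hq : 1 / x ^ 2 + 1 / y ^ 2 ≤ v ^ 2 + 4 * v + 8 := by
    have h1 : 1 / x ^ 2 = (1 / x) ^ 2 := by simp
    have h2 : 1 / y ^ 2 = (v + 2) ^ 2 := by rw [hv]; simp
    rw [h1, h2]
    nlinarith
  have hq0 : 0 ≤ 1 / x ^ 2 + 1 / y ^ 2 := by positivity
  have h3 : 0 ≤ v ^ 3 := by positivity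
  have h4 : 0 ≤ v ^ 4 := by positivity
  constructor
  · nlinarith [sq_nonneg (v - 1)]
  · have h5 : (1 / x ^ 2 + 1 / y ^ 2) ^ 2 ≤ (v ^ 2 + 4 * v + 8) ^ 2 := by gcongr
    nlinarith [sq_nonneg (v - 1), sq_nonneg (v ^ 2 - 4)]

/-- The gradient bound (v) in the variables `w` and `q`: as `(7/2)² ≤ 25/2`, it gives
`(w q)² ≤ (25/2) (1 + w)⁴`. -/
lemma two_mul_exp_mul_le {x y : ℝ} (hx : 0 < x) (hy : 0 < y) (hxy : x + y = 1) :
    2 * (Real.exp (1 / x - 1 / y) * (1 / x ^ 2 + 1 / y ^ 2)) ≤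
      7 * (1 + Real.exp (1 / x - 1 / y)) ^ 2 := by
  have hw := Real.exp_pos (1 / x - 1 / y)
  rcases le_total y x with h | h
  · have h1 := (inv_sq_add_inv_sq_le hy h hxy).1
    have h2 : Real.exp (1 / x - 1 / y) * Real.exp (1 / y - 1 / x) = 1 := by
      rw [← Real.exp_add]; simp
    have := mul_le_mul_of_nonneg_left h1 hw.le
    nlinarith [sq_nonneg (Real.exp (1 / x - 1 / y))]
  · have h1 := (inv_sq_add_inv_sq_le hx h (by linarith)).1
    have := mul_le_mul_of_nonneg_left h1 hw.le
    nlinarith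

/-- The second-derivative bound (iv), multiplied by `(1 + w)⁶ / 4`. -/
lemma hessian_poly_nonneg {x y : ℝ} (hx : 0 < x) (hy : 0 < y) (hxy : x + y = 1) {w q : ℝ}
    (hw : w = Real.exp (1 / x - 1 / y)) (hq : q = 1 / x ^ 2 + 1 / y ^ 2) :
    0 ≤ 4 * w ^ 2 * q ^ 2 - w * q ^ 2 - w * (1 + w) * (2 / x ^ 3 - 2 / y ^ 3)
      + 50 * (1 + w) ^ 2 := by
  have hw0 : 0 < w := hw ▸ Real.exp_pos _
  rcases le_total y x with h | h
  · have h1 := (inv_sq_add_inv_sq_le hy h hxy).2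
    rw [← hq] at h1
    have h2 : w * Real.exp (1 / y - 1 / x) = 1 := by
      rw [hw, ← Real.exp_add]; simp
    have h3 : w * q ^ 2 ≤ 50 * (1 + 6 * w) := by
      have := mul_le_mul_of_nonneg_left h1 hw0.le
      linarith
    have h4 : 2 / x ^ 3 ≤ 2 / y ^ 3 := by gcongr
    have h5 : 0 ≤ w * (1 + w) * (2 / y ^ 3 - 2 / x ^ 3) :=
      mul_nonneg (by positivity) (by linarith)
    have h6 : w * q ^ 2 - 4 * w ^ 2 * q ^ 2 ≤ 50 * (1 + w) ^ 2 := by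
      rcases le_total (4 * w) 1 with h7 | h7
      · have := mul_le_mul_of_nonneg_right h3 (sub_nonneg.2 h7)
        nlinarith
      · have : 0 ≤ w * q ^ 2 * (4 * w - 1) := mul_nonneg (by positivity) (by linarith)
        nlinarith [sq_nonneg (1 + w)]
    linarith
  -- Here `w ≥ 1`, and `3 w² q² ≥ 6 w² / x³` beats the term containing `q' ≤ 2 / x³`.
  · have hxy' : 1 / y ≤ 1 / x := by gcongr
    have hw1 : 1 ≤ w := by rw [hw]; exact Real.one_le_exp (by linarith)
    obtain ⟨a, ha⟩ : ∃ a, a = 1 / x := ⟨_, rfl⟩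
    have ha2 : 2 ≤ a := by rw [ha, le_div_iff₀ hx]; linarith
    have hqa : a ^ 2 ≤ q := by
      have h0 : 0 ≤ 1 / y ^ 2 := by positivity
      have h1 : a ^ 2 = 1 / x ^ 2 := by rw [ha]; simp
      linarith
    have hq2 : 2 * a ^ 3 ≤ q ^ 2 := by
      have h1 : (a ^ 2) ^ 2 ≤ q ^ 2 := by gcongr
      have h2 : 0 ≤ a ^ 3 * (a - 2) := mul_nonneg (by positivity) (by linarith)
      nlinarith
    have hq' : 2 / x ^ 3 - 2 / y ^ 3 ≤ 2 * a ^ 3 := by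
      have h0 : 0 ≤ 2 / y ^ 3 := by positivity
      have h1 : 2 * a ^ 3 = 2 / x ^ 3 := by rw [ha]; field_simp
      linarith
    have h1 : w * (1 + w) * (2 / x ^ 3 - 2 / y ^ 3) ≤ w * (1 + w) * q ^ 2 := by
      gcongr
      linarith
    have h2 : 0 ≤ w * (w - 1) * q ^ 2 :=
      mul_nonneg (mul_nonneg hw0.le (by linarith)) (sq_nonneg q)
    nlinarith [sq_nonneg (w * q)]

/-- The cut-off `r ↦ S (2 - r) ^ 4`, with `S` the smooth transition from `0` at `0` to `1` at `1`. -/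
noncomputable def cutoff (r : ℝ) : ℝ := Real.smoothTransition (2 - r) ^ 4

/-- The weight `w = exp (1/x - 1/y)` at `x = 2 - r`, `y = r - 1`. -/
noncomputable def cutoffWeight (r : ℝ) : ℝ := Real.exp (1 / (2 - r) - 1 / (r - 1))

/-- The logarithmic derivative `q = 1/x² + 1/y²` of `cutoffWeight`. -/
noncomputable def cutoffRate (r : ℝ) : ℝ := 1 / (2 - r) ^ 2 + 1 / (r - 1) ^ 2

lemma cutoffWeight_pos (r : ℝ) : 0 < cutoffWeight r := Real.exp_pos _

lemma contDiff_cutoff : ContDiff ℝ (⊤ : ℕ∞) cutoff :=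
  (Real.smoothTransition.contDiff.comp (contDiff_const.sub contDiff_id)).pow 4

lemma antitone_cutoff : Antitone cutoff := fun a b h =>
  pow_le_pow_left₀ (Real.smoothTransition.nonneg _)
    (Real.smoothTransition.monotone (by linarith)) 4

lemma cutoff_eq {r : ℝ} (h1 : 1 < r) (h2 : r < 2) :
    cutoff r = 1 / (1 + cutoffWeight r) ^ 4 := by
  have hx : ¬ 2 - r ≤ 0 := by linarith
  have hy : ¬ r - 1 ≤ 0 := by linarith
  have hy' : 1 - (2 - r) = r - 1 := by ring
  have hw : Real.exp (-(r - 1)⁻¹) = Real.exp (-(2 - r)⁻¹) * cutoffWeight r := by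
    rw [cutoffWeight, ← Real.exp_add]
    congr 1
    ring
  have hp := Real.exp_pos (-(2 - r)⁻¹)
  have hwp := cutoffWeight_pos r
  simp only [cutoff, Real.smoothTransition, expNegInvGlue, hy', hx, hy, if_false, hw]
  rw [← one_div_pow]
  congr 1
  field_simp

lemma hasDerivAt_cutoffWeight {r : ℝ} (h1 : 1 < r) (h2 : r < 2) :
    HasDerivAt cutoffWeight (cutoffWeight r * cutoffRate r) r := by
  have hx : 2 - r ≠ 0 := by linarith
  have hy : r - 1 ≠ 0 := by linarith
  have hX : HasDerivAt (fun r : ℝ => 2 - r) (-1) r := by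
    simpa using (hasDerivAt_id r).const_sub 2
  have hY : HasDerivAt (fun r : ℝ => r - 1) 1 r := (hasDerivAt_id r).sub_const 1
  have h := (((hasDerivAt_const r (1 : ℝ)).div hX hx).sub
    ((hasDerivAt_const r (1 : ℝ)).div hY hy)).exp
  refine h.congr_deriv ?_
  simp only [cutoffWeight, cutoffRate, Pi.sub_apply, Pi.div_apply]
  ring

lemma hasDerivAt_cutoffRate {r : ℝ} (h1 : 1 < r) (h2 : r < 2) :
    HasDerivAt cutoffRate (2 / (2 - r) ^ 3 - 2 / (r - 1) ^ 3) r := by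
  have hx : 2 - r ≠ 0 := by linarith
  have hy : r - 1 ≠ 0 := by linarith
  have hX : HasDerivAt (fun r : ℝ => 2 - r) (-1) r := by
    simpa using (hasDerivAt_id r).const_sub 2
  have hY : HasDerivAt (fun r : ℝ => r - 1) 1 r := (hasDerivAt_id r).sub_const 1
  have h := ((hasDerivAt_const r (1 : ℝ)).div (hX.pow 2) (pow_ne_zero 2 hx)).add
    ((hasDerivAt_const r (1 : ℝ)).div (hY.pow 2) (pow_ne_zero 2 hy))
  refine h.congr_deriv ?_
  simp only [Pi.pow_apply]
  field_simp
  ring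

lemma deriv_cutoff {r : ℝ} (h1 : 1 < r) (h2 : r < 2) :
    deriv cutoff r = -4 * (cutoffWeight r * cutoffRate r) / (1 + cutoffWeight r) ^ 5 := by
  have hwp := cutoffWeight_pos r
  have he : cutoff =ᶠ[nhds r] fun s => 1 / (1 + cutoffWeight s) ^ 4 := by
    filter_upwards [Ioo_mem_nhds h1 h2] with s hs using cutoff_eq hs.1 hs.2
  rw [he.deriv_eq]
  have h := (hasDerivAt_const r (1 : ℝ)).div
    (((hasDerivAt_cutoffWeight h1 h2).const_add 1).pow 4)
    (pow_pos (by linarith : 0 < 1 + cutoffWeight r) 4).ne'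
  refine (h.congr_deriv ?_).deriv
  simp only [Pi.pow_apply]
  field_simp
  ring

lemma deriv_deriv_cutoff {r : ℝ} (h1 : 1 < r) (h2 : r < 2) :
    deriv (deriv cutoff) r =
      4 * (4 * cutoffWeight r ^ 2 * cutoffRate r ^ 2 - cutoffWeight r * cutoffRate r ^ 2
        - cutoffWeight r * (1 + cutoffWeight r) * (2 / (2 - r) ^ 3 - 2 / (r - 1) ^ 3))
        / (1 + cutoffWeight r) ^ 6 := by
  have hwp := cutoffWeight_pos r
  have he : deriv cutoff =ᶠ[nhds r]
      fun s => -4 * (cutoffWeight s * cutoffRate s) / (1 + cutoffWeight s) ^ 5 := by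
    filter_upwards [Ioo_mem_nhds h1 h2] with s hs using deriv_cutoff hs.1 hs.2
  rw [he.deriv_eq]
  have hw := hasDerivAt_cutoffWeight h1 h2
  have h := ((hw.mul (hasDerivAt_cutoffRate h1 h2)).const_mul (-4)).div
    ((hw.const_add 1).pow 5) (pow_pos (by linarith : 0 < 1 + cutoffWeight r) 5).ne'
  refine (h.congr_deriv ?_).deriv
  simp only [Pi.pow_apply, Pi.mul_apply]
  generalize 2 / (2 - r) ^ 3 - 2 / (r - 1) ^ 3 = q'
  field_simp
  ring

/-- Outside `(1, 2)` the cut-off attains its maximum `1` or its minimum `0`. -/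
lemma deriv_cutoff_eq_zero {r : ℝ} (h : r ≤ 1 ∨ 2 ≤ r) : deriv cutoff r = 0 := by
  rcases h with h | h
  · refine IsLocalMax.deriv_eq_zero (Filter.Eventually.of_forall fun s => ?_)
    have : cutoff r = 1 := by
      rw [cutoff, Real.smoothTransition.one_of_one_le (by linarith), one_pow]
    rw [this]
    exact pow_le_one₀ (Real.smoothTransition.nonneg _) (Real.smoothTransition.le_one _)
  · refine IsLocalMin.deriv_eq_zero (Filter.Eventually.of_forall fun s => ?_)
    have : cutoff r = 0 := by
      rw [cutoff, Real.smoothTransition.zero_of_nonpos (by linarith)]; norm_num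
    rw [this]
    exact pow_nonneg (Real.smoothTransition.nonneg _) 4

lemma deriv_deriv_cutoff_eq_zero {r : ℝ} (h : r ≤ 1 ∨ 2 ≤ r) : deriv (deriv cutoff) r = 0 := by
  refine IsLocalMax.deriv_eq_zero (Filter.Eventually.of_forall fun s => ?_)
  rw [deriv_cutoff_eq_zero h]
  exact antitone_cutoff.deriv_nonpos

/-- There exists a smooth cut-off function `φ : ℝ → ℝ` with
(i) `0 ≤ φ ≤ 1`, (ii) `φ = 1` on `(-∞, 1]` and `φ = 0` on `[2, ∞)`,
(iii) `φ' ≤ 0`, (iv) `φ'' ≥ -200 φ`, (v) `(φ')² ≤ 200 φ^{3/2}`. -/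
theorem exists_smooth_cutoff :
    ∃ φ : ℝ → ℝ, ContDiff ℝ (⊤ : ℕ∞) φ ∧
      (∀ r : ℝ, 0 ≤ φ r ∧ φ r ≤ 1) ∧
      (∀ r : ℝ, r ≤ 1 → φ r = 1) ∧
      (∀ r : ℝ, 2 ≤ r → φ r = 0) ∧
      (∀ r : ℝ, deriv φ r ≤ 0) ∧
      (∀ r : ℝ, deriv (deriv φ) r ≥ -200 * φ r) ∧
      (∀ r : ℝ, (deriv φ r) ^ 2 ≤ 200 * (φ r) ^ ((3 : ℝ) / 2)) := by
  have hnn : ∀ r, 0 ≤ cutoff r := fun r => pow_nonneg (Real.smoothTransition.nonneg _) 4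
  refine ⟨cutoff, contDiff_cutoff, fun r => ⟨hnn r, ?_⟩, fun r hr => ?_, fun r hr => ?_,
    fun r => antitone_cutoff.deriv_nonpos, fun r => ?_, fun r => ?_⟩
  · exact pow_le_one₀ (Real.smoothTransition.nonneg _) (Real.smoothTransition.le_one _)
  · rw [cutoff, Real.smoothTransition.one_of_one_le (by linarith), one_pow]
  · rw [cutoff, Real.smoothTransition.zero_of_nonpos (by linarith)]; norm_num
  · by_cases h : r ≤ 1 ∨ 2 ≤ r
    · rw [deriv_deriv_cutoff_eq_zero h]
      linarith [hnn r]
    · push Not at h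
      have hwp := cutoffWeight_pos r
      have key := hessian_poly_nonneg (x := 2 - r) (y := r - 1) (by linarith) (by linarith)
        (by ring) (w := cutoffWeight r) (q := cutoffRate r) rfl rfl
      have hφ : cutoff r = (1 + cutoffWeight r) ^ 2 / (1 + cutoffWeight r) ^ 6 := by
        rw [cutoff_eq h.1 h.2]
        field_simp
      rw [deriv_deriv_cutoff h.1 h.2, hφ, ge_iff_le, ← mul_div_assoc]
      exact div_le_div_of_nonneg_right (by linarith) (by positivity)
  · by_cases h : r ≤ 1 ∨ 2 ≤ r
    · rw [deriv_cutoff_eq_zero h]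
      have := Real.rpow_nonneg (hnn r) (3 / 2)
      linarith
    · push Not at h
      have hwp := cutoffWeight_pos r
      have hq : 0 ≤ cutoffRate r := by unfold cutoffRate; positivity
      have key : 2 * (cutoffWeight r * cutoffRate r) ≤ 7 * (1 + cutoffWeight r) ^ 2 :=
        two_mul_exp_mul_le (x := 2 - r) (y := r - 1) (by linarith) (by linarith) (by ring)
      have hφ : cutoff r ^ ((3 : ℝ) / 2) =
          (1 + cutoffWeight r) ^ 4 / (1 + cutoffWeight r) ^ 10 := by
        have h0 : 0 ≤ 1 / (1 + cutoffWeight r) := by positivity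
        rw [cutoff_eq h.1 h.2, ← one_div_pow, ← Real.rpow_natCast, ← Real.rpow_mul h0,
          show ((4 : ℕ) : ℝ) * (3 / 2) = ((6 : ℕ) : ℝ) by norm_num, Real.rpow_natCast]
        field_simp
      rw [deriv_cutoff h.1 h.2, hφ, div_pow, ← pow_mul, ← mul_div_assoc]
      gcongr
      have h2 : (2 * (cutoffWeight r * cutoffRate r)) ^ 2 ≤ (7 * (1 + cutoffWeight r) ^ 2) ^ 2 := by
        gcongr
      have h4 : 0 < (1 + cutoffWeight r) ^ 4 := by positivity
      nlinarith
end

section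
/- For all real numbers A, B > 0 there exist a constant 0 < k₀ < ∞ (depending only on A and B) and a smooth function φ : ℝ → ℝ with the following properties: (i) 0 ≤ φ(r) ≤ 1 for all r; (ii) φ(r) = 1 for all r ≤ A and φ(r) = 0 for all r ≥ A + B; (iii) φ is non-increasing, i.e. φ'(r) ≤ 0 for all r; (iv) φ''(r) ≥ −k₀·φ(r) and (φ'(r))² ≤ k₀·φ(r) for all r; (v) (φ'(r))² ≤ k₀·(φ(r))^{3/2} for all r. -/
/-!
The cut-off is a rescaled fourth power of a monotone smooth step `s` from `0` to `1`.
Let `E = expNegInvGlue` (that is, `exp (-1/x)` for `x > 0`, and `0` otherwise), let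
`b t = E t * E (1 - t)`, and let `s t` be `∫ u in 0..t, b u` divided by its value at `t = 1`.
Since `E' x = x⁻² E x`, we have `b' t = (t⁻² - (1 - t)⁻²) b t`, which is nonnegative for
`t ≤ 1/2`, so `s` is convex there; for `t ≥ 1/2` the step is bounded below by `s (1/2) > 0` while
`b'` is bounded below. Hence `s'' ≥ -M s` everywhere (`exists_smooth_step`).

For `φ = s⁴` composed with the decreasing affine map `r ↦ (A + B - r) / B`, the second derivative
of `s⁴` is `12 s² s'² + 4 s³ s'' ≥ -4 M s⁴`, and `((s⁴)')² = 16 s⁶ s'² ≤ 16 M² (s⁴)^(3/2)`, because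
`s'` is bounded; the power `3/2` bound implies the power `1` bound as `0 ≤ s ≤ 1`.
-/

/-- At `x ≤ 0` both sides vanish, so the formula `E' = x⁻² E` holds on the whole line. -/
lemma hasDerivAt_expNegInvGlue (x : ℝ) :
    HasDerivAt expNegInvGlue (x⁻¹ ^ 2 * expNegInvGlue x) x := by
  simpa using expNegInvGlue.hasDerivAt_polynomial_eval_inv_mul 1 x

lemma expNegInvGlue_le_one (x : ℝ) : expNegInvGlue x ≤ 1 := by
  unfold expNegInvGlue
  split_ifs with h
  · exact zero_le_one
  · exact Real.exp_le_one_iff.2 (neg_nonpos.2 (inv_nonneg.2 (not_le.1 h).le))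

lemma inv_sq_mul_expNegInvGlue_le_two (x : ℝ) : x⁻¹ ^ 2 * expNegInvGlue x ≤ 2 := by
  unfold expNegInvGlue
  split_ifs with h
  · simp
  · have hx : 0 ≤ x⁻¹ := inv_nonneg.2 (not_le.1 h).le
    have := Real.quadratic_le_exp_of_nonneg hx
    rw [Real.exp_neg, ← div_eq_mul_inv, div_le_iff₀ (Real.exp_pos _)]
    nlinarith

/-- A smooth monotone step `s` from `0` to `1` with derivatives `s₁`, `s₂`, whose slope is bounded
and whose second derivative satisfies `s₂ ≥ -M s`. -/
lemma exists_smooth_step : ∃ (s s₁ s₂ : ℝ → ℝ) (M : ℝ), 0 < M ∧ ContDiff ℝ (⊤ : ℕ∞) s ∧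
    (∀ t, HasDerivAt s (s₁ t) t) ∧ (∀ t, HasDerivAt s₁ (s₂ t) t) ∧
    (∀ t, 0 ≤ s t ∧ s t ≤ 1) ∧ (∀ t ≤ 0, s t = 0) ∧ (∀ t, 1 ≤ t → s t = 1) ∧
    (∀ t, 0 ≤ s₁ t ∧ s₁ t ≤ M) ∧ (∀ t, -M * s t ≤ s₂ t) := by
  set E := expNegInvGlue with hE
  set b : ℝ → ℝ := fun t => E t * E (1 - t) with hb
  set J : ℝ → ℝ := fun t => ∫ u in (0 : ℝ)..t, b u with hJ
  have E0 : ∀ t, 0 ≤ E t := expNegInvGlue.nonneg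
  have E1 : ∀ t, E t ≤ 1 := expNegInvGlue_le_one
  have b0 : ∀ t, 0 ≤ b t := fun t => mul_nonneg (E0 _) (E0 _)
  have b1 : ∀ t, b t ≤ 1 := fun t => mul_le_one₀ (E1 _) (E0 _) (E1 _)
  have bsm : ContDiff ℝ (⊤ : ℕ∞) b :=
    expNegInvGlue.contDiff.mul (expNegInvGlue.contDiff.comp (contDiff_const.sub contDiff_id))
  have bc : Continuous b := bsm.continuous
  have hbd : ∀ t, HasDerivAt b ((t⁻¹ ^ 2 - (1 - t)⁻¹ ^ 2) * b t) t := by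
    intro t
    have h2 : HasDerivAt (fun t => E (1 - t)) (-((1 - t)⁻¹ ^ 2 * E (1 - t))) t := by
      simpa using (hasDerivAt_expNegInvGlue (1 - t)).comp_const_sub 1 t
    refine ((hasDerivAt_expNegInvGlue t).mul h2).congr_deriv ?_
    simp only [hb, hE]
    ring
  have hJd : ∀ t, HasDerivAt J (b t) t := fun t => bc.integral_hasStrictDerivAt 0 t |>.hasDerivAt
  have Jmono : Monotone J := monotone_of_hasDerivAt_nonneg hJd b0
  have Jsm : ContDiff ℝ (⊤ : ℕ∞) J := by
    rw [contDiff_infty_iff_deriv]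
    refine ⟨fun t => (hJd t).differentiableAt, ?_⟩
    rwa [show deriv J = b from funext fun t => (hJd t).deriv]
  have J0 : J 0 = 0 := by simp [hJ]
  have Jneg : ∀ t ≤ 0, J t = 0 := by
    intro t ht
    refine intervalIntegral.integral_zero_ae (Filter.Eventually.of_forall fun u hu => ?_)
    rw [Set.uIoc_of_ge ht] at hu
    simp [hb, hE, expNegInvGlue.zero_of_nonpos hu.2]
  have Jone : ∀ t, 1 ≤ t → J t = J 1 := by
    intro t ht
    rw [← sub_eq_zero]
    simp only [hJ]
    rw [intervalIntegral.integral_interval_sub_left (bc.intervalIntegrable _ _)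
      (bc.intervalIntegrable _ _)]
    refine intervalIntegral.integral_zero_ae (Filter.Eventually.of_forall fun u hu => ?_)
    rw [Set.uIoc_of_le ht] at hu
    simp [hb, hE, expNegInvGlue.zero_of_nonpos (sub_nonpos.2 hu.1.le)]
  have Jhalf : 0 < J (1 / 2) := by
    refine intervalIntegral.intervalIntegral_pos_of_pos_on (bc.intervalIntegrable _ _) ?_
      (by norm_num)
    intro u hu
    exact mul_pos (expNegInvGlue.pos_of_pos hu.1)
      (expNegInvGlue.pos_of_pos (by linarith [hu.2]))
  have Jnn : ∀ t, 0 ≤ J t := by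
    intro t
    rcases le_total t 0 with h | h
    · exact (Jneg t h).ge
    · exact J0 ▸ Jmono h
  have hI : 0 < J 1 := Jhalf.trans_le (Jmono (by norm_num))
  have Jle : ∀ t, J t ≤ J 1 := by
    intro t
    rcases le_total t 1 with h | h
    · exact Jmono h
    · exact (Jone t h).le
  have key : ∀ t, -(2 / J (1 / 2)) * J t ≤ (t⁻¹ ^ 2 - (1 - t)⁻¹ ^ 2) * b t := by
    intro t
    have hc : 0 < 2 / J (1 / 2) := by positivity
    rcases le_total t (1 / 2) with h | h
    · -- convexity of `J` on `(-∞, 1/2]`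
      have h1 : 0 ≤ (t⁻¹ ^ 2 - (1 - t)⁻¹ ^ 2) * b t := by
        rcases le_or_gt t 0 with h0 | h0
        · simp [hb, hE, expNegInvGlue.zero_of_nonpos h0]
        · refine mul_nonneg (sub_nonneg.2 ?_) (b0 t)
          have : 0 ≤ (1 - t)⁻¹ := inv_nonneg.2 (by linarith)
          gcongr
          linarith
      nlinarith [mul_nonneg hc.le (Jnn t)]
    · have h1 : (1 - t)⁻¹ ^ 2 * b t ≤ 2 := by
        have h3 := inv_sq_mul_expNegInvGlue_le_two (1 - t)
        calc (1 - t)⁻¹ ^ 2 * b t = E t * ((1 - t)⁻¹ ^ 2 * E (1 - t)) := by simp only [hb]; ring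
          _ ≤ 1 * ((1 - t)⁻¹ ^ 2 * E (1 - t)) :=
            mul_le_mul_of_nonneg_right (E1 t) (mul_nonneg (sq_nonneg _) (E0 _))
          _ ≤ 2 := by simpa using h3
      have h2 : 2 ≤ 2 / J (1 / 2) * J t := by
        rw [div_mul_eq_mul_div, le_div_iff₀ Jhalf]
        linarith [Jmono h]
      nlinarith [mul_nonneg (sq_nonneg t⁻¹) (b0 t)]
  refine ⟨fun t => J t / J 1, fun t => b t / J 1,
    fun t => (t⁻¹ ^ 2 - (1 - t)⁻¹ ^ 2) * b t / J 1, 2 / J (1 / 2) + 1 / J 1, by positivity,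
    Jsm.div_const _, fun t => (hJd t).div_const _, fun t => (hbd t).div_const _,
    fun t => ⟨div_nonneg (Jnn t) hI.le, (div_le_one hI).2 (Jle t)⟩,
    fun t ht => by simp [Jneg t ht], fun t ht => by simp [Jone t ht, hI.ne'],
    fun t => ⟨div_nonneg (b0 t) hI.le, ?_⟩, fun t => ?_⟩
  · have h1 : b t / J 1 ≤ 1 / J 1 := by gcongr; exact b1 t
    have h2 : 0 < 2 / J (1 / 2) := by positivity
    linarith
  · have h1 : 0 ≤ 1 / J 1 * J t := mul_nonneg (by positivity) (Jnn t)
    show _ * (J t / J 1) ≤ _ / J 1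
    rw [← mul_div_assoc, div_le_div_iff_of_pos_right hI]
    nlinarith [key t]

/-- For `A, B > 0` there exist `0 < k₀ < ∞` and a smooth cut-off `φ` with
`0 ≤ φ ≤ 1`, `φ = 1` on `(-∞, A]`, `φ = 0` on `[A + B, ∞)`, `φ' ≤ 0`,
`φ'' ≥ -k₀ φ`, `(φ')² ≤ k₀ φ` and `(φ')² ≤ k₀ φ^{3/2}`. -/
theorem exists_smooth_cutoff_shifted (A B : ℝ) (hA : 0 < A) (hB : 0 < B) :
    ∃ (k₀ : ℝ) (φ : ℝ → ℝ), 0 < k₀ ∧ ContDiff ℝ (⊤ : ℕ∞) φ ∧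
      (∀ r : ℝ, 0 ≤ φ r ∧ φ r ≤ 1) ∧
      (∀ r : ℝ, r ≤ A → φ r = 1) ∧
      (∀ r : ℝ, A + B ≤ r → φ r = 0) ∧
      (∀ r : ℝ, deriv φ r ≤ 0) ∧
      (∀ r : ℝ, deriv (deriv φ) r ≥ -k₀ * φ r) ∧
      (∀ r : ℝ, (deriv φ r) ^ 2 ≤ k₀ * φ r) ∧
      (∀ r : ℝ, (deriv φ r) ^ 2 ≤ k₀ * (φ r) ^ ((3 : ℝ) / 2)) := by
  obtain ⟨s, s₁, s₂, M, hM, hsm, hd1, hd2, h01, hs0, hs1, hb1, hb2⟩ := exists_smooth_step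
  set x : ℝ → ℝ := fun r => (A + B - r) / B with hx
  have hxd : ∀ r, HasDerivAt x (-1 / B) r := fun r =>
    ((hasDerivAt_id r).const_sub (A + B)).div_const B
  have hsd : ∀ r, HasDerivAt (fun r => s (x r)) (s₁ (x r) * (-1 / B)) r := fun r =>
    (hd1 (x r)).comp r (hxd r)
  have hs1d : ∀ r, HasDerivAt (fun r => s₁ (x r)) (s₂ (x r) * (-1 / B)) r := fun r =>
    (hd2 (x r)).comp r (hxd r)
  have D1 : deriv (fun r => s (x r) ^ 4) =
      fun r => 4 * s (x r) ^ 3 * (s₁ (x r) * (-1 / B)) := by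
    funext r
    refine Eq.trans ((hsd r).pow 4).deriv ?_
    simp
  have D2 : ∀ r, deriv (fun r => 4 * s (x r) ^ 3 * (s₁ (x r) * (-1 / B))) r =
      (12 * s (x r) ^ 2 * s₁ (x r) ^ 2 + 4 * s (x r) ^ 3 * s₂ (x r)) / B ^ 2 := by
    intro r
    have h := ((((hsd r).pow 3).const_mul 4).mul ((hs1d r).mul_const (-1 / B))).deriv
    refine Eq.trans h ?_
    simp
    field_simp
    ring
  have hsq : ∀ r, (4 * s (x r) ^ 3 * (s₁ (x r) * (-1 / B))) ^ 2 ≤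
      16 * M ^ 2 / B ^ 2 * s (x r) ^ 6 := by
    intro r
    have h1 : s₁ (x r) ^ 2 ≤ M ^ 2 := pow_le_pow_left₀ (hb1 _).1 (hb1 _).2 2
    calc _ = 16 * s₁ (x r) ^ 2 / B ^ 2 * s (x r) ^ 6 := by field_simp; ring
      _ ≤ _ := by
        have := (h01 (x r)).1
        gcongr
  set k := 4 * M / B ^ 2 + 16 * M ^ 2 / B ^ 2 with hk
  have hk1 : 16 * M ^ 2 / B ^ 2 ≤ k := le_add_of_nonneg_left (by positivity)
  have hk2 : 4 * M / B ^ 2 ≤ k := le_add_of_nonneg_right (by positivity)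
  have hk0 : 0 < k := by positivity
  refine ⟨k, fun r => s (x r) ^ 4, hk0, ?_, fun r => ?_, fun r hr => ?_, fun r hr => ?_,
    fun r => ?_, fun r => ?_, fun r => ?_, fun r => ?_⟩
  · exact (hsm.comp ((contDiff_const.sub contDiff_id).div_const B)).pow 4
  · exact ⟨pow_nonneg (h01 _).1 4, pow_le_one₀ (h01 _).1 (h01 _).2⟩
  · have : 1 ≤ x r := by
      simp only [hx]
      rw [le_div_iff₀ hB]
      linarith
    simp [hs1 _ this]
  · have : x r ≤ 0 := div_nonpos_of_nonpos_of_nonneg (by linarith) hB.le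
    simp [hs0 _ this]
  · rw [D1]
    have h1 := (h01 (x r)).1
    have h2 := (hb1 (x r)).1
    have h3 : 0 ≤ 4 * s (x r) ^ 3 * (s₁ (x r) * (1 / B)) := by positivity
    rw [neg_div]
    linarith
  · rw [D1, D2]
    have h1 := (h01 (x r)).1
    calc -k * s (x r) ^ 4 ≤ -(4 * M / B ^ 2) * s (x r) ^ 4 := by gcongr
      _ = 4 * s (x r) ^ 3 * (-M * s (x r)) / B ^ 2 := by ring
      _ ≤ (12 * s (x r) ^ 2 * s₁ (x r) ^ 2 + 4 * s (x r) ^ 3 * s₂ (x r)) / B ^ 2 := by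
        gcongr
        have h2 := mul_le_mul_of_nonneg_left (hb2 (x r))
          (by positivity : 0 ≤ 4 * s (x r) ^ 3)
        have h3 : 0 ≤ 12 * s (x r) ^ 2 * s₁ (x r) ^ 2 := by positivity
        linarith
  · rw [D1]
    have h1 := (h01 (x r)).1
    refine (hsq r).trans (mul_le_mul hk1 ?_ (by positivity) hk0.le)
    exact pow_le_pow_of_le_one h1 (h01 _).2 (by norm_num)
  · rw [D1]
    have h1 := (h01 (x r)).1
    have h2 : (s (x r) ^ 4) ^ ((3 : ℝ) / 2) = s (x r) ^ 6 := by
      rw [← Real.rpow_natCast, ← Real.rpow_mul h1, ← Real.rpow_natCast]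
      norm_num
    refine (hsq r).trans ?_
    simp only [h2]
    gcongr
end

section
/- Let α, β, γ be real numbers with α ≤ β ≤ γ. Then α² + βγ + 2(α² + β² + γ² + αβ + αγ + βγ) ≥ (1/1000)·(3α + 2β + 2γ)². -/
/-- If `α ≤ β ≤ γ` then
`α² + βγ + 2(α² + β² + γ² + αβ + αγ + βγ) ≥ (1/1000)(3α + 2β + 2γ)²`. -/
theorem reaction_term_estimate (α β γ : ℝ) (hαβ : α ≤ β) (hβγ : β ≤ γ) :
    α ^ 2 + β * γ +
        2 * (α ^ 2 + β ^ 2 + γ ^ 2 + α * β + α * γ + β * γ)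
      ≥ (1 / 1000) * (3 * α + 2 * β + 2 * γ) ^ 2 := by
  -- The difference of the two sides is a positive definite quadratic form: it equals
  -- `0.994 (α + β + γ)² + 1.997 α² + 0.752 (β + γ)² + 0.25 (β - γ)²`.
  linarith [sq_nonneg (α + β + γ), sq_nonneg α, sq_nonneg (β + γ), sq_nonneg (β - γ)]
end
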